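/- Let L be a full-rank lattice in ℝ^m with L ⊆ L^*, so that the quotient L^*/L is a finite group of some order N, and let {α_ℓ}_{ℓ=1}^N ⊆ L^* be a complete set of representatives of the cosets of L in L^* with α_1 ∈ L. Define the N×N complex matrix S by S_{ℓℓ'} := N^{−1/2} e^{−2πi⟨α_ℓ, α_{ℓ'}⟩}. Then for all indices ℓ₁, ℓ₂, ℓ₃, the Verlinde sum ∑_{ℓ=1}^N S_{ℓ₁ℓ} S_{ℓ₂ℓ} conj(S_{ℓℓ₃}) / S_{1ℓ} equals 1 if α_{ℓ₁} + α_{ℓ₂} − α_{ℓ₃} ∈ L, and equals 0 otherwise. -/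

import Mathlib

open Finset Complex

noncomputable section

/-- The dual lattice `L^* = {x : ⟨x,y⟩ ∈ ℤ for all y ∈ L}` of a lattice `L ⊆ ℝ^d`. -/
def dualLat {d : ℕ} (L : Submodule ℤ (Fin d → ℝ)) : Submodule ℤ (Fin d → ℝ) where
  carrier := {x | ∀ y ∈ L, ∃ k : ℤ, ∑ i, x i * y i = (k : ℝ)}
  add_mem' := by
    intro a b ha hb y hy
    obtain ⟨k1, h1⟩ := ha y hy
    obtain ⟨k2, h2⟩ := hb y hy
    refine ⟨k1 + k2, ?_⟩
    push_cast
    rw [← h1, ← h2, ← Finset.sum_add_distrib]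
    exact Finset.sum_congr rfl fun i _ => by simp [add_mul]
  zero_mem' := fun y hy => ⟨0, by simp⟩
  smul_mem' := by
    intro c a ha y hy
    obtain ⟨k, h⟩ := ha y hy
    refine ⟨c * k, ?_⟩
    push_cast
    rw [← h, Finset.mul_sum]
    exact Finset.sum_congr rfl fun i _ => by simp [zsmul_eq_mul]; ring

/-!
Reducing the bilinear form modulo `ℤ` turns `L^*/L` into a finite abelian group `A` with a pairing
`b : A × A → ℝ/ℤ`, which is nondegenerate because `L^** = L`. The matrix `S` is the character table
`e^{-2πi b(x, y)}` divided by `√|A|`. As `0` pairs trivially with everything, each term of the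
Verlinde sum is `|A|⁻¹` times the value at `ℓ` of the character `b(ℓ₁ + ℓ₂ - ℓ₃, ·)`, and
orthogonality of characters evaluates the sum. Positive definiteness and integrality of `L` enter
only to make `L` discrete.
-/

section FiniteGroup

/-- The faithful character `t ↦ e^{-2πit}` of `ℝ/ℤ`, with the sign occurring in the matrix `S`. -/
def circlePhase : AddChar UnitAddCircle ℂ :=
  Circle.coeHom.compAddChar (AddCircle.toCircle_addChar.compAddMonoidHom (-AddMonoidHom.id _))

theorem circlePhase_coe (t : ℝ) :
    circlePhase t = Complex.exp (-2 * (Real.pi : ℂ) * Complex.I * t) := by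
  change ((AddCircle.toCircle ((-t : ℝ) : UnitAddCircle) : Circle) : ℂ) = _
  rw [AddCircle.toCircle_apply_mk, Circle.coe_exp]
  push_cast
  ring_nf

theorem circlePhase_injective : Function.Injective circlePhase :=
  Subtype.coe_injective.comp <| (AddCircle.injective_toCircle one_ne_zero).comp neg_injective

variable {A G : Type*} [AddCommGroup A] [AddCommGroup G]

theorem sum_circlePhase_eq_ite [Fintype G] (f : G →ₗ[ℤ] UnitAddCircle) [Decidable (f = 0)] :
    ∑ x, circlePhase (f x) = if f = 0 then (Fintype.card G : ℂ) else 0 := by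
  classical
  have hf : circlePhase.compAddMonoidHom f.toAddMonoidHom = 0 ↔ f = 0 := by
    rw [AddChar.eq_zero_iff, LinearMap.ext_iff]
    exact forall_congr' fun x => circlePhase_injective.eq_iff' circlePhase.map_zero_eq_one
  have hsum := AddChar.sum_eq_ite (circlePhase.compAddMonoidHom f.toAddMonoidHom)
  simp only [hf] at hsum
  exact hsum

/-- The modular `S`-matrix of a pairing `b` with values in `ℝ/ℤ`, normalised to be unitary when
`b` is a perfect pairing of finite groups. -/
def modularMatrix (b : A →ₗ[ℤ] G →ₗ[ℤ] UnitAddCircle) : Matrix A G ℂ :=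
  .of fun a x => (1 / Real.sqrt (Nat.card G) : ℝ) * circlePhase (b a x)

variable (b : A →ₗ[ℤ] G →ₗ[ℤ] UnitAddCircle)

theorem modularMatrix_verlinde_term [Finite G] (a₁ a₂ a₃ : A) (x : G) :
    modularMatrix b a₁ x * modularMatrix b a₂ x * (starRingEnd ℂ) (modularMatrix b a₃ x)
      / modularMatrix b 0 x = (Nat.card G : ℂ)⁻¹ * circlePhase (b (a₁ + a₂ - a₃) x) := by
  have hG : (0 : ℝ) < Nat.card G := Nat.cast_pos.2 Nat.card_pos
  have hsq : ((Real.sqrt (Nat.card G) : ℝ) : ℂ) ^ 2 = Nat.card G := by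
    exact_mod_cast Real.sq_sqrt hG.le
  have hne : ((Real.sqrt (Nat.card G) : ℝ) : ℂ) ≠ 0 :=
    Complex.ofReal_ne_zero.2 (Real.sqrt_pos.2 hG).ne'
  have hphase : circlePhase (b (a₁ + a₂ - a₃) x)
      = circlePhase (b a₁ x) * circlePhase (b a₂ x) * (circlePhase (b a₃ x))⁻¹ := by
    simp only [map_add, map_sub, LinearMap.add_apply, LinearMap.sub_apply,
      AddChar.map_sub_eq_div, AddChar.map_add_eq_mul, div_eq_mul_inv]
  have hconj : (starRingEnd ℂ) (circlePhase (b a₃ x)) = (circlePhase (b a₃ x))⁻¹ :=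
    (Circle.coe_inv_eq_conj _).symm
  simp only [modularMatrix, Matrix.of_apply, map_zero, LinearMap.zero_apply,
    AddChar.map_zero_eq_one, map_mul, Complex.conj_ofReal, hconj, hphase, ← hsq]
  push_cast
  field_simp

theorem modularMatrix_verlinde_formula [Fintype G] (hb : Function.Injective b) (a₁ a₂ a₃ : A)
    [Decidable (a₁ + a₂ - a₃ = 0)] :
    ∑ x, modularMatrix b a₁ x * modularMatrix b a₂ x * (starRingEnd ℂ) (modularMatrix b a₃ x)
      / modularMatrix b 0 x = if a₁ + a₂ - a₃ = 0 then 1 else 0 := by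
  classical
  simp only [modularMatrix_verlinde_term, ← Finset.mul_sum, sum_circlePhase_eq_ite,
    map_eq_zero_iff b hb, Nat.card_eq_fintype_card, mul_ite, mul_zero,
    inv_mul_cancel₀ (Nat.cast_ne_zero.2 Fintype.card_ne_zero : (Fintype.card G : ℂ) ≠ 0)]

end FiniteGroup

section DiscriminantForm

variable {E : Type*} [AddCommGroup E] [Module ℝ E] (B : LinearMap.BilinForm ℝ E)
  (L M : Submodule ℤ E)

/-- The restriction of `B` to a subgroup `M`, reduced modulo `ℤ`. -/
def pairingModOne : M →ₗ[ℤ] M →ₗ[ℤ] UnitAddCircle :=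
  ((B.restrictScalars₁₂ ℤ ℤ).domRestrict₁₂ M M).compr₂
    (QuotientAddGroup.mk' (AddSubgroup.zmultiples (1 : ℝ))).toIntLinearMap

variable {B L M}

theorem pairingModOne_apply (x y : M) :
    pairingModOne B M x y = (B x y : UnitAddCircle) := rfl

theorem pairingModOne_isRefl (hB : B.IsSymm) : (pairingModOne B M).IsRefl := fun x y h => by
  rwa [pairingModOne_apply, ← hB.eq x y]

theorem mem_ker_pairingModOne {x : M} :
    x ∈ (pairingModOne B M).ker ↔ (x : E) ∈ B.dualSubmodule M := by
  simp only [LinearMap.mem_ker, LinearMap.ext_iff, pairingModOne_apply, LinearMap.zero_apply,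
    AddCircle.coe_eq_zero_iff, zsmul_one, LinearMap.BilinForm.mem_dualSubmodule,
    Submodule.mem_one, eq_intCast, Subtype.forall]

/-- The discriminant form of `L`: the pairing with values in `ℝ/ℤ` that `B` induces on `M/(L ∩ M)`
when `L ∩ M` is the radical of `B` modulo `ℤ` on `M`; for an integral lattice, `M` is `L^*`. -/
def discriminantForm (hB : B.IsSymm) (hL : (pairingModOne B M).ker = L.comap M.subtype) :
    (M ⧸ L.comap M.subtype) →ₗ[ℤ] (M ⧸ L.comap M.subtype) →ₗ[ℤ] UnitAddCircle :=
  (pairingModOne_isRefl hB).liftQ₂ _ _ hL.ge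

theorem discriminantForm_injective (hB : B.IsSymm)
    (hL : (pairingModOne B M).ker = L.comap M.subtype) :
    Function.Injective (discriminantForm hB hL) := by
  refine (injective_iff_map_eq_zero _).2 fun q hq => ?_
  obtain ⟨x, rfl⟩ := Submodule.Quotient.mk_surjective _ q
  rw [Submodule.Quotient.mk_eq_zero, ← hL]
  exact LinearMap.ext fun y => LinearMap.congr_fun hq (Submodule.Quotient.mk y)

end DiscriminantForm

section DualLattice

variable {E : Type*} [NormedAddCommGroup E] [NormedSpace ℝ E] [FiniteDimensional ℝ E]
  {B : LinearMap.BilinForm ℝ E} (L : Submodule ℤ E) [DiscreteTopology L] [IsZLattice ℝ L]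

theorem dualSubmodule_dualSubmodule_of_isZLattice (hB : B.Nondegenerate) (hBs : B.IsSymm) :
    B.dualSubmodule (B.dualSubmodule L) = L := by
  have : Module.Free ℤ L := ZLattice.module_free ℝ L
  let b := Module.Free.chooseBasis ℤ L
  rw [← b.ofZLatticeBasis_span ℝ]
  exact B.dualSubmodule_dualSubmodule_of_basis hB hBs _

theorem ker_pairingModOne_dualSubmodule (hB : B.Nondegenerate) (hBs : B.IsSymm) :
    (pairingModOne B (B.dualSubmodule L)).ker = L.comap (B.dualSubmodule L).subtype := by
  ext x
  rw [mem_ker_pairingModOne, dualSubmodule_dualSubmodule_of_isZLattice L hB hBs]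
  rfl

end DualLattice

section DotProduct

theorem dotProductBilin_isSymm {n R : Type*} [Fintype n] [CommSemiring R] :
    LinearMap.BilinForm.IsSymm (dotProductBilin R R : LinearMap.BilinForm R (n → R)) :=
  ⟨fun x y => dotProduct_comm x y⟩

theorem dotProductBilin_nondegenerate {n R : Type*} [Fintype n] [CommRing R] :
    LinearMap.BilinForm.Nondegenerate (dotProductBilin R R : LinearMap.BilinForm R (n → R)) :=
  (LinearMap.IsRefl.nondegenerate_iff_separatingLeft
    (B := (dotProductBilin R R : LinearMap.BilinForm R (n → R)))
    (LinearMap.BilinForm.IsSymm.isRefl dotProductBilin_isSymm)).2 dotProduct_eq_zero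

theorem discreteTopology_of_le_dualLat {d : ℕ} {L : Submodule ℤ (Fin d → ℝ)}
    (hL : L ≤ dualLat L) : DiscreteTopology L := by
  have hopen : IsOpen {x : L | (x : Fin d → ℝ) ⬝ᵥ x < 1} :=
    isOpen_lt (by fun_prop) continuous_const
  suffices {x : L | (x : Fin d → ℝ) ⬝ᵥ x < 1} = {0} from
    discreteTopology_of_isOpen_singleton_zero (this ▸ hopen)
  refine Set.eq_singleton_iff_unique_mem.2 ⟨by simp, fun x hx => ?_⟩
  obtain ⟨k, hk : (x : Fin d → ℝ) ⬝ᵥ x = k⟩ := hL x.2 x x.2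
  have hk_nonneg : (0 : ℝ) ≤ k := hk ▸ Finset.sum_nonneg fun i _ => mul_self_nonneg _
  have hk_lt : (k : ℝ) < 1 := hk ▸ hx
  have hk_zero : k = 0 := by
    norm_cast at hk_nonneg hk_lt
    omega
  exact Subtype.ext (dotProduct_self_eq_zero.1 (by rw [hk, hk_zero, Int.cast_zero]))

end DotProduct

/-- For a lattice that is not integral, `L^*/(L ∩ L^*)` takes the place of `L^*/L`; it is finite
because it is indexed by `ι`. -/
theorem lattice_verlinde_formula_general {E ι : Type*} [NormedAddCommGroup E] [NormedSpace ℝ E]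
    [FiniteDimensional ℝ E] [Fintype ι] {B : LinearMap.BilinForm ℝ E} (hB : B.Nondegenerate)
    (hBs : B.IsSymm) (L M : Submodule ℤ E) [DiscreteTopology L] [IsZLattice ℝ L]
    (hM : ∀ x, x ∈ M ↔ ∀ y ∈ L, ∃ k : ℤ, B x y = k) (α : ι → M)
    (hα : Function.Bijective fun i => (Submodule.Quotient.mk (α i) : M ⧸ L.comap M.subtype))
    {i₀ : ι} (hi₀ : (α i₀ : E) ∈ L) (S : ι → ι → ℂ)
    (hS : ∀ i j, S i j = (1 / Real.sqrt (Fintype.card ι) : ℝ) *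
      Complex.exp (-2 * (Real.pi : ℂ) * Complex.I * (B (α i) (α j) : ℝ)))
    (i j k : ι) [Decidable ((α i + α j - α k : E) ∈ L)] :
    ∑ l, S i l * S j l * (starRingEnd ℂ) (S l k) / S i₀ l
      = if (α i + α j - α k : E) ∈ L then 1 else 0 := by
  classical
  let e := Equiv.ofBijective _ hα
  let := Fintype.ofEquiv _ e
  obtain rfl : M = B.dualSubmodule L := by
    ext x
    simp only [hM, LinearMap.BilinForm.mem_dualSubmodule, Submodule.mem_one, eq_comm, eq_intCast]
  have hker := ker_pairingModOne_dualSubmodule L hB hBs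
  have hS_eq (i j) : S i j = modularMatrix (discriminantForm hBs hker) (e i) (e j) := by
    rw [hS, ← circlePhase_coe, Fintype.card_congr e, ← Nat.card_eq_fintype_card]
    rfl
  have hS_symm (i j) : S i j = S j i := by rw [hS, hS, hBs.eq]
  have he₀ : e i₀ = 0 := (Submodule.Quotient.mk_eq_zero _).2 hi₀
  have hmem : e i + e j - e k = 0 ↔ (α i + α j - α k : E) ∈ L :=
    Submodule.Quotient.mk_eq_zero _ (x := α i + α j - α k)
  simp only [hS_symm _ k, hS_eq, he₀, ← hmem]
  rw [← modularMatrix_verlinde_formula _ (discriminantForm_injective hBs hker)]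
  exact e.sum_comp fun q => modularMatrix _ (e i) q * modularMatrix _ (e j) q *
    (starRingEnd ℂ) (modularMatrix _ (e k) q) / modularMatrix _ 0 q

open scoped Classical in
/-- For a full-rank lattice `L ⊆ ℝ^m` with `L ⊆ L^*`, `N = |L^*/L|`, coset
representatives `α_ℓ` with `α_1 ∈ L`, and `S_{ℓℓ'} = N^{-1/2} e^{-2πi⟨α_ℓ,α_{ℓ'}⟩}`, the
Verlinde sum `∑_ℓ S_{ℓ₁ℓ} S_{ℓ₂ℓ} conj(S_{ℓℓ₃})/S_{1ℓ}` equals `1` if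
`α_{ℓ₁} + α_{ℓ₂} - α_{ℓ₃} ∈ L` and `0` otherwise. -/
theorem lattice_verlinde_formula {m N : ℕ}
    (L : Submodule ℤ (Fin m → ℝ))
    (hfree : Module.Free ℤ L) (hfg : Module.Finite ℤ L)
    (hspan : Submodule.span ℝ (L : Set (Fin m → ℝ)) = ⊤)
    (hLd : L ≤ dualLat L) (hN : 0 < N)
    (hcard : Nat.card ((↥(dualLat L)) ⧸ L.comap (dualLat L).subtype) = N)
    (α : Fin N → (Fin m → ℝ)) (hα : ∀ ℓ, α ℓ ∈ dualLat L)
    (hrep : Function.Bijective fun ℓ : Fin N =>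
      (Submodule.Quotient.mk (⟨α ℓ, hα ℓ⟩ : ↥(dualLat L)) :
        (↥(dualLat L)) ⧸ L.comap (dualLat L).subtype))
    (h1 : α ⟨0, hN⟩ ∈ L)
    (S : Fin N → Fin N → ℂ)
    (hS : ∀ ℓ ℓ', S ℓ ℓ' = (1 / Real.sqrt N : ℝ) *
      Complex.exp (-2 * (Real.pi : ℂ) * Complex.I * ((∑ i, α ℓ i * α ℓ' i : ℝ) : ℂ)))
    (ℓ₁ ℓ₂ ℓ₃ : Fin N) :
    (∑ ℓ, S ℓ₁ ℓ * S ℓ₂ ℓ * (starRingEnd ℂ) (S ℓ ℓ₃) / S ⟨0, hN⟩ ℓ)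
      = if α ℓ₁ + α ℓ₂ - α ℓ₃ ∈ L then 1 else 0 := by
  have := discreteTopology_of_le_dualLat hLd
  have : IsZLattice ℝ L := ⟨hspan⟩
  exact lattice_verlinde_formula_general dotProductBilin_nondegenerate dotProductBilin_isSymm
    L (dualLat L) (fun _ => Iff.rfl) (fun ℓ => ⟨α ℓ, hα ℓ⟩) hrep h1 S
    (by rwa [Fintype.card_fin]) ℓ₁ ℓ₂ ℓ₃

end
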